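/- (Coefficient extraction for zero-order spline expansions.) Let R ⊂ (0,1]^d be a finite set, let γ : R → ℝ, and define f : [0,1]^d → ℝ by f(x) = Σ_{v∈R} γ_v ∏_{j=1}^d 1[v_j ≤ x_j]. Then for every u ∈ R, |γ_u| ≤ 2^d · sup_{x∈[0,1]^d} |f(x)|; consequently Σ_{u∈R} |γ_u| ≤ |R| · 2^d · sup_{x∈[0,1]^d} |f(x)|, i.e. the ℓ¹-norm of the coefficients (the sectional variation norm of f) is at most |R|·2^d times the supremum norm of f. -/

import Mathlib

/-!
On a box `(a, u]` the alternating sum of a function over the corners turns the indicator of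
`[v, ∞)` into the indicator of `v ∈ (a, u]`: the corner obtained by lowering the coordinates in `s`
lies above `v` iff `v ≤ u` and `s ⊆ {j | v j ≤ a j}`, and the signed count of such `s` vanishes
unless this last set is empty. Hence the alternating sum of a step expansion is the sum of the
coefficients whose knots lie in the box, and a small enough box isolates a single knot. A coordinate
in which the knot lies on the lower boundary of the domain cannot be lowered; no lowering is needed
there, because no knot lies below it.
-/

open Finset

lemma exists_mem_Icc_forall_lt_imp_le {α : Type*} [LinearOrder α] (S : Finset α) {l t : α}
    (hle : l ≤ t) :
    ∃ a ∈ Set.Icc l t, (l < t → a < t) ∧ ∀ s ∈ S, s < t → s ≤ a := by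
  obtain ⟨a, ha, hmax⟩ := (insert l {s ∈ S | s < t}).exists_max_image id (insert_nonempty _ _)
  have ha_cases : a = l ∨ a < t := by
    simp only [mem_insert, mem_filter] at ha
    exact ha.imp_right And.right
  refine ⟨a, ⟨hmax l (mem_insert_self _ _), ?_⟩, ?_, fun s hs hst => ?_⟩
  · exact ha_cases.elim (fun h => h.trans_le hle) le_of_lt
  · exact fun h => ha_cases.elim (fun hal => hal.trans_lt h) id
  · exact hmax s (mem_insert_of_mem (mem_filter.2 ⟨hs, hst⟩))

section StepExpansion

variable {X E : Type*} [Preorder X]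

/-- The zero-order spline `x ↦ ∑ v ∈ R, γ v * 1[v ≤ x]` with knots `R` and coefficients `γ`, on an
arbitrary preorder and with coefficients in an arbitrary additive monoid. -/
noncomputable def stepExpansion [AddCommMonoid E] (R : Finset X) (γ : X → E) (x : X) : E :=
  ∑ v ∈ R, (Set.Ici v).indicator (fun _ => γ v) x

lemma norm_stepExpansion_le [SeminormedAddCommGroup E] (R : Finset X) (γ : X → E) (x : X) :
    ‖stepExpansion R γ x‖ ≤ ∑ v ∈ R, ‖γ v‖ :=
  norm_sum_le_of_le _ fun _ _ => norm_indicator_le_norm_self _ _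

lemma norm_stepExpansion_le_iSup [SeminormedAddCommGroup E] (R : Finset X) (γ : X → E) {s : Set X}
    {x : X} (hx : x ∈ s) : ‖stepExpansion R γ x‖ ≤ ⨆ y ∈ s, ‖stepExpansion R γ y‖ := by
  refine le_ciSup₂ (f := fun y (_ : y ∈ s) => ‖stepExpansion R γ y‖) ⟨∑ v ∈ R, ‖γ v‖, ?_⟩ x hx
  simp only [mem_upperBounds, Set.mem_iUnion, Set.mem_range]
  rintro _ ⟨y, _, rfl⟩
  exact norm_stepExpansion_le R γ y

end StepExpansion

lemma stepExpansion_pi_eq_sum_mul_prod {ι K : Type*} [Fintype ι] {α : ι → Type*}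
    [∀ j, Preorder (α j)] [∀ j, DecidableLE (α j)] [CommSemiring K] (R : Finset (∀ j, α j))
    (γ : (∀ j, α j) → K) (x : ∀ j, α j) :
    stepExpansion R γ x = ∑ v ∈ R, γ v * ∏ j, if v j ≤ x j then 1 else 0 := by
  classical
  simp only [stepExpansion, Fintype.prod_ite_zero, prod_const_one, mul_ite, mul_one, mul_zero,
    Set.indicator_apply, Set.mem_Ici, Pi.le_def]

section HalfOpenBox

variable {ι : Type*} {α : ι → Type*}

/-- The half-open box `(a, u]`, with the lower constraint imposed only in the directions `J`;
dropping it elsewhere accommodates points on the lower boundary of the domain. -/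
def halfOpenBox [∀ j, Preorder (α j)] (J : Finset ι) (a u : ∀ j, α j) : Set (∀ j, α j) :=
  {v | v ≤ u ∧ ∀ j ∈ J, a j < v j}

lemma mem_halfOpenBox [∀ j, Preorder (α j)] {J : Finset ι} {a u v : ∀ j, α j} :
    v ∈ halfOpenBox J a u ↔ v ≤ u ∧ ∀ j ∈ J, a j < v j :=
  Iff.rfl

lemma exists_mem_halfOpenBox_iff_eq [Finite ι] [∀ j, LinearOrder (α j)] {R : Finset (∀ j, α j)}
    {l u : ∀ j, α j} (hR : ∀ v ∈ R, l ≤ v) (hlu : l ≤ u) :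
    ∃ J : Finset ι, ∃ a ∈ Set.Icc l u, ∀ v ∈ R, v ∈ halfOpenBox J a u ↔ v = u := by
  have := Fintype.ofFinite ι
  choose a ha hlt hgap using fun j =>
    exists_mem_Icc_forall_lt_imp_le (R.image fun v => v j) (hlu j)
  refine ⟨univ.filter fun j => l j < u j, a, ⟨fun j => (ha j).1, fun j => (ha j).2⟩, fun v hv => ?_⟩
  simp only [mem_halfOpenBox, mem_filter_univ]
  constructor
  · rintro ⟨hvu, hav⟩
    refine funext fun j => (hvu j).eq_of_not_lt fun hj => ?_
    exact (hav j ((hR v hv j).trans_lt hj)).not_ge (hgap j _ (mem_image_of_mem _ hv) hj)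
  · rintro rfl
    exact ⟨le_rfl, hlt⟩

end HalfOpenBox

section GeneralizedDifference

variable {ι E : Type*} {α : ι → Type*} [DecidableEq ι]

lemma le_piecewise_iff_of_le [∀ j, Preorder (α j)] {a u v : ∀ j, α j} (hau : a ≤ u)
    (s : Finset ι) : v ≤ s.piecewise a u ↔ v ≤ u ∧ ∀ j ∈ s, v j ≤ a j := by
  constructor
  · refine fun h => ⟨h.trans (piecewise_le_of_le_of_le _ hau le_rfl), fun j hj => ?_⟩
    simpa only [piecewise_eq_of_mem _ _ _ hj] using h j
  · rintro ⟨hvu, hva⟩ j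
    by_cases hj : j ∈ s
    · simpa only [piecewise_eq_of_mem _ _ _ hj] using hva j hj
    · simpa only [piecewise_eq_of_notMem _ _ _ hj] using hvu j

/-- The generalized difference of `f` from `a` to `u` in the directions `J`: the alternating sum of
`f` over the corners obtained from `u` by lowering some of the coordinates in `J` to those of `a`.
For `J = univ` these are all the corners of the box `(a, u]`. -/
def generalizedDifference [AddCommGroup E] (J : Finset ι) (a u : ∀ j, α j)
    (f : (∀ j, α j) → E) : E :=
  ∑ s ∈ J.powerset, (-1 : ℤ) ^ #s • f (s.piecewise a u)

lemma generalizedDifference_sum [AddCommGroup E] {κ : Type*} (J : Finset ι) (a u : ∀ j, α j)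
    (R : Finset κ) (f : κ → (∀ j, α j) → E) :
    generalizedDifference J a u (fun x => ∑ v ∈ R, f v x) =
      ∑ v ∈ R, generalizedDifference J a u (f v) := by
  simp only [generalizedDifference, smul_sum]
  exact sum_comm

lemma norm_generalizedDifference_le [SeminormedAddCommGroup E] {J : Finset ι} {a u : ∀ j, α j}
    {f : (∀ j, α j) → E} {C : ℝ} (hf : ∀ s ⊆ J, ‖f (s.piecewise a u)‖ ≤ C) :
    ‖generalizedDifference J a u f‖ ≤ 2 ^ #J * C := by
  calc ‖generalizedDifference J a u f‖ ≤ ∑ _s ∈ J.powerset, C := by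
        refine norm_sum_le_of_le _ fun s hs => ?_
        rcases neg_one_pow_eq_or ℤ #s with h | h <;>
          simpa only [h, neg_smul, one_smul, norm_neg] using hf s (mem_powerset.1 hs)
    _ = 2 ^ #J * C := by
        rw [sum_const, card_powerset, nsmul_eq_mul, Nat.cast_pow, Nat.cast_ofNat]

variable [∀ j, LinearOrder (α j)] {a u : ∀ j, α j}

lemma generalizedDifference_indicator_Ici [AddCommGroup E] (J : Finset ι) (hau : a ≤ u)
    (v : ∀ j, α j) (c : E) :
    generalizedDifference J a u ((Set.Ici v).indicator fun _ => c) =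
      (halfOpenBox J a u).indicator (fun _ => c) v := by
  classical
  by_cases hvu : v ≤ u
  · set T : Finset ι := {j ∈ J | v j ≤ a j} with hT
    have hcorner (s) (hs : s ∈ J.powerset) : v ≤ s.piecewise a u ↔ s ∈ T.powerset := by
      simp only [le_piecewise_iff_of_le hau, hvu, true_and, mem_powerset, hT, subset_iff,
        mem_filter]
      exact forall₂_congr fun j hj => (and_iff_right (mem_powerset.1 hs hj)).symm
    have hbox : v ∈ halfOpenBox J a u ↔ T = ∅ := by
      simp only [mem_halfOpenBox, hvu, true_and, hT, filter_eq_empty_iff, not_le]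
    calc generalizedDifference J a u ((Set.Ici v).indicator fun _ => c)
        = ∑ s ∈ J.powerset, if s ∈ T.powerset then (-1 : ℤ) ^ #s • c else 0 :=
          sum_congr rfl fun s hs => by
            simp only [Set.indicator_apply, Set.mem_Ici, hcorner s hs, smul_ite, smul_zero]
      _ = (∑ s ∈ T.powerset, (-1 : ℤ) ^ #s) • c := by
          rw [sum_ite_mem, inter_eq_right.2 (powerset_mono.2 (filter_subset _ _)), sum_smul]
      _ = (halfOpenBox J a u).indicator (fun _ => c) v := by
          simp only [sum_powerset_neg_one_pow_card, ite_smul, one_smul, zero_smul,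
            Set.indicator_apply, hbox]
  · have hcorner (s : Finset ι) : ¬ v ≤ s.piecewise a u :=
      fun h => hvu ((le_piecewise_iff_of_le hau s).1 h).1
    simp only [generalizedDifference, Set.indicator_apply, Set.mem_Ici, hcorner,
      mem_halfOpenBox, hvu, false_and, if_false, smul_zero, sum_const_zero]

lemma generalizedDifference_stepExpansion [AddCommGroup E] (J : Finset ι) (hau : a ≤ u)
    (R : Finset (∀ j, α j)) (γ : (∀ j, α j) → E) :
    generalizedDifference J a u (stepExpansion R γ) =
      ∑ v ∈ R, (halfOpenBox J a u).indicator γ v :=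
  (generalizedDifference_sum J a u R _).trans <|
    sum_congr rfl fun v _ => generalizedDifference_indicator_Ici J hau v (γ v)

lemma exists_generalizedDifference_stepExpansion_eq [Finite ι] [AddCommGroup E]
    {l : ∀ j, α j} {R : Finset (∀ j, α j)} (hR : ∀ v ∈ R, l ≤ v) (hu : u ∈ R) (γ : (∀ j, α j) → E) :
    ∃ J, ∃ a ∈ Set.Icc l u, generalizedDifference J a u (stepExpansion R γ) = γ u := by
  classical
  obtain ⟨J, a, ha, hbox⟩ := exists_mem_halfOpenBox_iff_eq hR (hR u hu)
  refine ⟨J, a, ha, ?_⟩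
  calc generalizedDifference J a u (stepExpansion R γ)
      = ∑ v ∈ R, (halfOpenBox J a u).indicator γ v :=
        generalizedDifference_stepExpansion J ha.2 R γ
    _ = ∑ v ∈ R, if v = u then γ v else 0 :=
        sum_congr rfl fun v hv => by simp only [Set.indicator_apply, hbox v hv]
    _ = γ u := by rw [sum_ite_eq', if_pos hu]

end GeneralizedDifference

section Bound

variable {ι E : Type*} [Fintype ι] {α : ι → Type*} [∀ j, LinearOrder (α j)]
  [SeminormedAddCommGroup E] {l b : ∀ j, α j} {R : Finset (∀ j, α j)}

lemma norm_coeff_le_of_norm_stepExpansion_le (hR : ∀ v ∈ R, l ≤ v) {γ : (∀ j, α j) → E}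
    {u : ∀ j, α j} (hu : u ∈ R) {C : ℝ} (hC : ∀ x ∈ Set.Icc l u, ‖stepExpansion R γ x‖ ≤ C) :
    ‖γ u‖ ≤ 2 ^ Fintype.card ι * C := by
  classical
  have hlu : l ≤ u := hR u hu
  have hC_nonneg : 0 ≤ C := (norm_nonneg _).trans (hC u ⟨hlu, le_rfl⟩)
  obtain ⟨J, a, ha, hJ⟩ := exists_generalizedDifference_stepExpansion_eq hR hu γ
  calc ‖γ u‖ = ‖generalizedDifference J a u (stepExpansion R γ)‖ := by rw [hJ]
    _ ≤ 2 ^ #J * C := norm_generalizedDifference_le fun s _ =>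
        hC _ (piecewise_mem_Icc_of_mem_of_mem s ha ⟨hlu, le_rfl⟩)
    _ ≤ 2 ^ Fintype.card ι * C := by
        gcongr
        · exact one_le_two
        · exact card_le_univ J

theorem stmt_9_general (hR : ∀ v ∈ R, v ∈ Set.Icc l b) (γ : (∀ j, α j) → E) :
    (∀ u ∈ R, ‖γ u‖ ≤ 2 ^ Fintype.card ι * ⨆ x ∈ Set.Icc l b, ‖stepExpansion R γ x‖) ∧
      ∑ u ∈ R, ‖γ u‖ ≤
        #R * 2 ^ Fintype.card ι * ⨆ x ∈ Set.Icc l b, ‖stepExpansion R γ x‖ := by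
  have hcoeff : ∀ u ∈ R,
      ‖γ u‖ ≤ 2 ^ Fintype.card ι * ⨆ x ∈ Set.Icc l b, ‖stepExpansion R γ x‖ := fun u hu =>
    norm_coeff_le_of_norm_stepExpansion_le (fun v hv => (hR v hv).1) hu fun x hx =>
      norm_stepExpansion_le_iSup R γ ⟨hx.1, hx.2.trans (hR u hu).2⟩
  refine ⟨hcoeff, ?_⟩
  simpa only [nsmul_eq_mul, mul_assoc] using sum_le_card_nsmul R _ _ hcoeff

end Bound

/-- Coefficient extraction for zero-order spline expansions: the `ℓ¹`-norm of the
coefficients (the sectional variation norm) is bounded by `|R|·2^d` times the sup norm. -/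
theorem stmt_9 (d : ℕ) (R : Finset (Fin d → ℝ))
    (hR : ∀ v ∈ R, ∀ j, v j ∈ Set.Ioc (0 : ℝ) 1)
    (γ : (Fin d → ℝ) → ℝ) (f : (Fin d → ℝ) → ℝ)
    (hf : ∀ x, f x = ∑ v ∈ R, γ v * ∏ j, (if v j ≤ x j then (1 : ℝ) else 0)) :
    (∀ u ∈ R, |γ u| ≤ 2 ^ d * ⨆ x ∈ Set.Icc (0 : Fin d → ℝ) 1, |f x|)
    ∧ (∑ u ∈ R, |γ u|)
        ≤ (R.card : ℝ) * 2 ^ d * ⨆ x ∈ Set.Icc (0 : Fin d → ℝ) 1, |f x| := by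
  have hR_Icc : ∀ v ∈ R, v ∈ Set.Icc 0 1 := fun v hv =>
    ⟨fun j => (hR v hv j).1.le, fun j => (hR v hv j).2⟩
  simpa only [hf, stepExpansion_pi_eq_sum_mul_prod, Fintype.card_fin, Real.norm_eq_abs]
    using stmt_9_general hR_Icc γ
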